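/- Let n ≥ 1, δ ∈ (0, n], and let f : ℝⁿ → [0, ∞] satisfy ∫_K f dH̃^δ_∞ < ∞ for every bounded set K ⊆ ℝⁿ. Then: (1) for every fixed r > 0, the map x ↦ f^δ_{B(x,r)} is lower semicontinuous on ℝⁿ (equivalently, {x ∈ ℝⁿ : f^δ_{B(x,r)} > t} is open for every t ∈ ℝ); and (2) the function x ↦ limsup_{r→0⁺} f^δ_{B(x,r)} is Lebesgue measurable. -/

import Mathlib

open MeasureTheory Set Metric Filter Topology
open scoped ENNReal

noncomputable section

/-- Euclidean space `ℝⁿ`. -/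
abbrev En (n : ℕ) : Type := EuclideanSpace ℝ (Fin n)

/-- The half-open dyadic cube `2^k (m + [0,1)ⁿ)`, `k : ℤ`, `m : ℤⁿ`. -/
def dyadicCube (n : ℕ) (k : ℤ) (m : Fin n → ℤ) : Set (En n) :=
  {x | ∀ i, (m i : ℝ) * 2 ^ k ≤ x i ∧ x i < ((m i : ℝ) + 1) * 2 ^ k}

/-- The `δ`-dimensional dyadic Hausdorff content `H̃^δ_∞`: the infimum of `Σ ℓ(Q_i)^δ`
over all countable collections of dyadic cubes whose union's interior covers `E`. -/
def dyadicContent (n : ℕ) (δ : ℝ) (E : Set (En n)) : ℝ≥0∞ :=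
  ⨅ (c : ℕ → ℤ × (Fin n → ℤ))
    (_ : E ⊆ interior (⋃ i, dyadicCube n (c i).1 (c i).2)),
    ∑' i, ENNReal.ofReal (((2 : ℝ) ^ (c i).1) ^ δ)

/-- The Choquet integral `∫_Ω f dH̃^δ_∞ := ∫_0^∞ H̃^δ_∞({x ∈ Ω : f x > t}) dt`
of a `[0,∞]`-valued function over `Ω ⊆ ℝⁿ`. -/
def choquetIntegral (n : ℕ) (δ : ℝ) (Ω : Set (En n)) (f : En n → ℝ≥0∞) : ℝ≥0∞ :=
  ∫⁻ t in Ioi (0 : ℝ), dyadicContent n δ {x | x ∈ Ω ∧ ENNReal.ofReal t < f x}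

/-- The Choquet integral `∫_Ω |f| dH̃^δ_∞` of a real-valued function. -/
def choquetIntegralAbs (n : ℕ) (δ : ℝ) (Ω : Set (En n)) (f : En n → ℝ) : ℝ≥0∞ :=
  choquetIntegral n δ Ω (fun x => ENNReal.ofReal |f x|)

/-- The Choquet integral `∫_Ω |f| dH̃^δ_∞` of an extended-real-valued function. -/
def choquetIntegralEAbs (n : ℕ) (δ : ℝ) (Ω : Set (En n)) (f : En n → EReal) : ℝ≥0∞ :=
  choquetIntegral n δ Ω (fun x => (f x).abs)

/-- The ball average `f^δ_{B(x,r)} := (1/H̃^δ_∞(B(x,r))) ∫_{B(x,r)} f dH̃^δ_∞`. -/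
def ballAvg (n : ℕ) (δ : ℝ) (f : En n → ℝ≥0∞) (x : En n) (r : ℝ) : ℝ≥0∞ :=
  choquetIntegral n δ (ball x r) f / dyadicContent n δ (ball x r)

/-- The Hausdorff-content centred maximal function `M^δ f(x)`. -/
def maximal (n : ℕ) (δ : ℝ) (f : En n → ℝ≥0∞) (x : En n) : ℝ≥0∞ :=
  ⨆ (r : ℝ) (_ : 0 < r), ballAvg n δ f x r

/-- `f^δ_*(x) := limsup_{r→0⁺} (1/H̃^δ_∞(B(x,r))) ∫_{B(x,r)} |f(y) − f(x)| dH̃^δ_∞(y)`. -/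
def lebDev (n : ℕ) (δ : ℝ) (f : En n → ℝ) (x : En n) : ℝ≥0∞ :=
  limsup (fun r : ℝ => choquetIntegralAbs n δ (ball x r) (fun y => f y - f x) /
    dyadicContent n δ (ball x r)) (𝓝[>] (0 : ℝ))

/-- `limsup_{r→0⁺} f^δ_{B(x,r)}` of the ball averages. -/
def limsupAvg (n : ℕ) (δ : ℝ) (f : En n → ℝ≥0∞) (x : En n) : ℝ≥0∞ :=
  limsup (fun r : ℝ => ballAvg n δ f x r) (𝓝[>] (0 : ℝ))

/-!
A cover by dyadic cubes may be replaced by its maximal cubes, and comparing the maximal cubes of two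
covers with their common refinement shows that the cost of covers is strongly subadditive. Hence the
content is continuous along increasing sequences of sets, and so is the Choquet integral; exhausting
a ball by smaller concentric balls makes the numerator of the average lower semicontinuous.

The denominator is upper semicontinuous because a closed ball has the same content as the open one.
Translates of a dyadic cube have comparable content, so continuity along increasing sequences gives
a Fatou lemma: for a fixed sequence `v k → 0` and all `p` outside a null set, if `p + v k` stays in
a cover, then it returns infinitely often to a single cube of it. Except for countably many points
`p` of the closed ball, such sequences in the open ball reach `p` from all orthants that dyadic
cubes can tell apart, so that a cover of the open ball is a neighbourhood of `p`.

The averages are thus lower semicontinuous. Their upper limit as the radius tends to zero is a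
countable infimum of suprema of averages, which are again lower semicontinuous, so it is a Borel
function.
-/

open TopologicalSpace (denseSeq denseRange_denseSeq)

/-! ### Dyadic cubes -/

lemma floor_div_two_zpow {k k' : ℤ} (h : k ≤ k') (x : ℝ) :
    ⌊x / (2 : ℝ) ^ k'⌋ = ⌊x / (2 : ℝ) ^ k⌋ / ((2 ^ (k' - k).toNat : ℕ) : ℤ) := by
  have hk' : (2 : ℝ) ^ k' = 2 ^ k * ((2 ^ (k' - k).toNat : ℕ) : ℝ) := by
    rw [Nat.cast_pow, Nat.cast_ofNat, ← zpow_natCast, ← zpow_add₀ two_ne_zero]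
    congr 1
    omega
  rw [← Int.floor_div_natCast, hk', div_div]

/-- The parameters `(k, m)` of the dyadic cube `2^k (m + [0,1)ⁿ)`. Cubes are represented by their
parameters, so that a collection of cubes is a set of indices. -/
@[ext]
structure DyadicIndex (n : ℕ) where
  scale : ℤ
  corner : Fin n → ℤ

namespace DyadicIndex

variable {n : ℕ} {q q' : DyadicIndex n} {x : En n}

/-- The dyadic cube with the given parameters. -/
def cube (q : DyadicIndex n) : Set (En n) := dyadicCube n q.scale q.corner

lemma mem_cube_iff_floor : x ∈ q.cube ↔ ∀ i, ⌊x i / (2 : ℝ) ^ q.scale⌋ = q.corner i := by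
  refine forall_congr' fun i => ?_
  have hpos : (0 : ℝ) < 2 ^ q.scale := by positivity
  rw [Int.floor_eq_iff, le_div_iff₀ hpos, div_lt_iff₀ hpos]

lemma exists_mem_cube (k : ℤ) (x : En n) : ∃ q : DyadicIndex n, q.scale = k ∧ x ∈ q.cube :=
  ⟨⟨k, fun i => ⌊x i / (2 : ℝ) ^ k⌋⟩, rfl, mem_cube_iff_floor.2 fun _ => rfl⟩

lemma cube_nonempty (q : DyadicIndex n) : q.cube.Nonempty :=
  ⟨WithLp.toLp 2 fun i => q.corner i * (2 : ℝ) ^ q.scale,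
    mem_cube_iff_floor.2 fun i => by
      simp [mul_div_cancel_right₀ _ (zpow_ne_zero q.scale (two_ne_zero' ℝ))]⟩

lemma eq_of_mem_cube (hscale : q.scale = q'.scale) (hx : x ∈ q.cube) (hx' : x ∈ q'.cube) :
    q = q' := by
  rw [mem_cube_iff_floor] at hx hx'
  exact DyadicIndex.ext hscale (funext fun i => by rw [← hx i, ← hx' i, hscale])

lemma cube_subset_cube (hscale : q.scale ≤ q'.scale) (hx : x ∈ q.cube) (hx' : x ∈ q'.cube) :
    q.cube ⊆ q'.cube := by
  intro y hy
  rw [mem_cube_iff_floor] at *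
  intro i
  rw [floor_div_two_zpow hscale, hy i, ← hx i, ← floor_div_two_zpow hscale, hx' i]

/-- Inclusion of cubes. The scales are compared as well, since for `n = 0` all cubes coincide. -/
instance : PartialOrder (DyadicIndex n) where
  le q q' := q.scale ≤ q'.scale ∧ q.cube ⊆ q'.cube
  le_refl _ := ⟨le_rfl, Subset.rfl⟩
  le_trans _ _ _ h h' := ⟨h.1.trans h'.1, h.2.trans h'.2⟩
  le_antisymm q _ h h' :=
    have ⟨_, hx⟩ := q.cube_nonempty
    eq_of_mem_cube (h.1.antisymm h'.1) hx (h.2 hx)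

lemma le_of_mem_cube (hscale : q.scale ≤ q'.scale) (hx : x ∈ q.cube) (hx' : x ∈ q'.cube) :
    q ≤ q' :=
  ⟨hscale, cube_subset_cube hscale hx hx'⟩

lemma exists_le_maximal {S : Set (DyadicIndex n)} {K : ℤ} (hK : ∀ q ∈ S, q.scale ≤ K)
    (hq : q ∈ S) : ∃ q', q ≤ q' ∧ Maximal (· ∈ S) q' := by
  obtain ⟨_, ⟨q', hq', hle, rfl⟩, hmax⟩ := Int.exists_greatest_of_bdd
    (P := fun k => ∃ q' ∈ S, q ≤ q' ∧ q'.scale = k)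
    ⟨K, by rintro _ ⟨q', hq', -, rfl⟩; exact hK q' hq'⟩ ⟨q.scale, q, hq, le_rfl, rfl⟩
  refine ⟨q', hle, hq', fun q'' hq'' hle' => ?_⟩
  have hscale : q''.scale ≤ q'.scale := hmax _ ⟨q'', hq'', hle.trans hle', rfl⟩
  have ⟨_, hx⟩ := q'.cube_nonempty
  exact le_of_mem_cube hscale (hle'.2 hx) hx

instance : Countable (DyadicIndex n) :=
  Function.Injective.countable (f := fun q : DyadicIndex n => (q.scale, q.corner))
    fun _ _ h => DyadicIndex.ext (congrArg Prod.fst h) (congrArg Prod.snd h)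

instance : MeasurableSpace (DyadicIndex n) := ⊤

instance : DiscreteMeasurableSpace (DyadicIndex n) := ⟨fun _ => trivial⟩

end DyadicIndex

section DyadicContent

variable {n : ℕ} {δ : ℝ}

/-- The union of a collection of dyadic cubes. -/
def cubeUnion (C : Set (DyadicIndex n)) : Set (En n) := ⋃ q ∈ C, q.cube

lemma mem_cubeUnion {C : Set (DyadicIndex n)} {x : En n} :
    x ∈ cubeUnion C ↔ ∃ q ∈ C, x ∈ q.cube := by
  simp [cubeUnion]

lemma cubeUnion_mono {C D : Set (DyadicIndex n)} (h : C ⊆ D) : cubeUnion C ⊆ cubeUnion D :=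
  biUnion_subset_biUnion_left h

/-- The maximal cubes of a collection. -/
def maximalCubes (S : Set (DyadicIndex n)) : Set (DyadicIndex n) := {q | Maximal (· ∈ S) q}

lemma maximalCubes_subset (S : Set (DyadicIndex n)) : maximalCubes S ⊆ S := fun _ hq => hq.prop

lemma cubeUnion_subset_cubeUnion_maximalCubes {S : Set (DyadicIndex n)} {K : ℤ}
    (hK : ∀ q ∈ S, q.scale ≤ K) : cubeUnion S ⊆ cubeUnion (maximalCubes S) := by
  intro x hx
  obtain ⟨q, hq, hxq⟩ := mem_cubeUnion.1 hx
  obtain ⟨q', hle, hq'⟩ := DyadicIndex.exists_le_maximal hK hq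
  exact mem_cubeUnion.2 ⟨q', hq', hle.2 hxq⟩

/-- The common refinement of two collections of dyadic cubes: the cubes of either collection that
lie in a cube of the other one. -/
def commonRefinement (A B : Set (DyadicIndex n)) : Set (DyadicIndex n) :=
  A ∩ lowerClosure B ∪ B ∩ lowerClosure A

lemma cubeUnion_inter_subset (A B : Set (DyadicIndex n)) :
    cubeUnion A ∩ cubeUnion B ⊆ cubeUnion (commonRefinement A B) := by
  rintro x ⟨hxA, hxB⟩
  obtain ⟨a, ha, hxa⟩ := mem_cubeUnion.1 hxA
  obtain ⟨b, hb, hxb⟩ := mem_cubeUnion.1 hxB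
  rcases le_total a.scale b.scale with h | h
  · exact mem_cubeUnion.2 ⟨a, .inl ⟨ha, b, hb, DyadicIndex.le_of_mem_cube h hxa hxb⟩, hxa⟩
  · exact mem_cubeUnion.2 ⟨b, .inr ⟨hb, a, ha, DyadicIndex.le_of_mem_cube h hxb hxa⟩, hxb⟩

/-- The weight `ℓ(Q)^δ` of a dyadic cube `Q` with `ℓ(Q) = 2^k`. -/
def scaleWeight (δ : ℝ) (k : ℤ) : ℝ≥0∞ := ENNReal.ofReal (((2 : ℝ) ^ k) ^ δ)

lemma tendsto_scaleWeight_atTop (hδ : 0 < δ) : Tendsto (scaleWeight δ) atTop (𝓝 ⊤) := by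
  have hpow : Tendsto (fun k : ℤ => (2 : ℝ) ^ k) atTop atTop := by
    simpa only [Function.comp_def, Real.rpow_intCast] using
      (tendsto_rpow_atTop_of_base_gt_one 2 one_lt_two).comp tendsto_intCast_atTop_atTop
  exact ENNReal.tendsto_ofReal_atTop.comp ((tendsto_rpow_atTop hδ).comp hpow)

lemma tendsto_scaleWeight_atBot (hδ : 0 < δ) : Tendsto (scaleWeight δ) atBot (𝓝 0) := by
  have hpow : Tendsto (fun k : ℤ => (2 : ℝ) ^ k) atBot (𝓝 0) := by
    simpa only [Function.comp_def, Real.rpow_intCast, id_eq] using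
      (tendsto_rpow_atBot_of_base_gt_one 2 one_lt_two).comp (tendsto_intCast_atBot_iff.2 tendsto_id)
  have hweight := ENNReal.tendsto_ofReal (hpow.rpow_const (p := δ) (.inr hδ.le))
  rwa [Real.zero_rpow hδ.ne', ENNReal.ofReal_zero] at hweight

lemma exists_scale_le_of_scaleWeight_le (hδ : 0 < δ) {B : ℝ≥0∞} (hB : B ≠ ⊤) :
    ∃ K : ℤ, ∀ k, scaleWeight δ k ≤ B → k ≤ K := by
  obtain ⟨K, hK⟩ :=
    eventually_atTop.1 ((tendsto_scaleWeight_atTop hδ).eventually_const_lt hB.lt_top)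
  exact ⟨K, fun k hk => le_of_not_ge fun hKk => (hK k hKk).not_ge hk⟩

/-- The total weight `∑ ℓ(Q)^δ` of a collection of dyadic cubes, as a measure on collections. -/
def cubeCost (n : ℕ) (δ : ℝ) : Measure (DyadicIndex n) :=
  Measure.count.withDensity fun q => scaleWeight δ q.scale

lemma cubeCost_apply (C : Set (DyadicIndex n)) :
    cubeCost n δ C = ∑' q : C, scaleWeight δ q.1.scale := by
  simp [cubeCost, withDensity_apply, lintegral_countable, C.to_countable]

lemma scaleWeight_le_cubeCost {C : Set (DyadicIndex n)} {q : DyadicIndex n} (hq : q ∈ C) :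
    scaleWeight δ q.scale ≤ cubeCost n δ C := by
  rw [cubeCost_apply]
  exact ENNReal.le_tsum (f := fun q : C => scaleWeight δ q.1.scale) ⟨q, hq⟩

lemma cubeCost_maximalCubes_union_add_le (S C : Set (DyadicIndex n)) :
    cubeCost n δ (maximalCubes (S ∪ C)) + cubeCost n δ (commonRefinement (maximalCubes S) C) ≤
      cubeCost n δ (maximalCubes S) + cubeCost n δ C := by
  have hmax : maximalCubes (S ∪ C) ⊆ maximalCubes S ∪ C := fun q hq =>
    hq.prop.imp_left fun hqS => hq.mono subset_union_left hqS
  have href : commonRefinement (maximalCubes S) C ⊆ maximalCubes S ∪ C :=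
    union_subset_union inter_subset_left inter_subset_left
  have hinter : maximalCubes (S ∪ C) ∩ commonRefinement (maximalCubes S) C ⊆
      maximalCubes S ∩ C := by
    rintro q ⟨hq, ⟨hqS, q', hq'C, hle⟩ | ⟨hqC, q', hq'S, hle⟩⟩
    · exact ⟨hqS, hq.eq_of_le (.inr hq'C) hle ▸ hq'C⟩
    · exact ⟨hq.eq_of_le (.inl hq'S.prop) hle ▸ hq'S, hqC⟩
  calc cubeCost n δ (maximalCubes (S ∪ C)) + cubeCost n δ (commonRefinement (maximalCubes S) C)
      = cubeCost n δ (maximalCubes (S ∪ C) ∪ commonRefinement (maximalCubes S) C) +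
          cubeCost n δ (maximalCubes (S ∪ C) ∩ commonRefinement (maximalCubes S) C) :=
        (measure_union_add_inter _ .of_discrete).symm
    _ ≤ cubeCost n δ (maximalCubes S ∪ C) + cubeCost n δ (maximalCubes S ∩ C) :=
        add_le_add (measure_mono (union_subset hmax href)) (measure_mono hinter)
    _ = cubeCost n δ (maximalCubes S) + cubeCost n δ C := measure_union_add_inter _ .of_discrete

lemma cubeCost_maximalCubes_iUnion_le {S : ℕ → Set (DyadicIndex n)} (hS : Monotone S)
    {B : ℝ≥0∞} (hB : ∀ k, cubeCost n δ (maximalCubes (S k)) ≤ B) :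
    cubeCost n δ (maximalCubes (⋃ k, S k)) ≤ B := by
  have hunion : maximalCubes (⋃ k, S k) = ⋃ k, maximalCubes (⋃ k, S k) ∩ S k := by
    rw [← inter_iUnion, inter_eq_left.2 (maximalCubes_subset _)]
  rw [hunion, Monotone.measure_iUnion fun i j hij => inter_subset_inter_right _ (hS hij)]
  refine iSup_le fun k => (measure_mono ?_).trans (hB k)
  exact fun q hq => hq.1.mono (subset_iUnion S k) hq.2

lemma tendsto_cubeCost_diff_finset {C : Set (DyadicIndex n)} (hC : cubeCost n δ C ≠ ⊤) :
    Tendsto (fun F : Finset (DyadicIndex n) => cubeCost n δ (C \ F)) atTop (𝓝 0) := by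
  have hempty : ⋂ F : Finset (DyadicIndex n), C \ (F : Set (DyadicIndex n)) = ∅ :=
    eq_empty_of_forall_notMem fun q hq => (mem_iInter.1 hq {q}).2 (by simp)
  have hanti : Antitone fun F : Finset (DyadicIndex n) => C \ (F : Set (DyadicIndex n)) :=
    fun F G hFG => sdiff_subset_sdiff_right (Finset.coe_subset.2 hFG)
  rw [← measure_empty (μ := cubeCost n δ), ← hempty]
  exact tendsto_measure_iInter_atTop (fun _ => MeasurableSet.of_discrete.nullMeasurableSet) hanti
    ⟨∅, by simpa using hC⟩

/-! ### Content and continuity along increasing sequences -/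

lemma cubeCost_singleton (q : DyadicIndex n) : cubeCost n δ {q} = scaleWeight δ q.scale := by
  rw [cubeCost_apply, tsum_singleton q fun q => scaleWeight δ q.scale]

lemma dyadicContent_mono {E F : Set (En n)} (h : E ⊆ F) :
    dyadicContent n δ E ≤ dyadicContent n δ F :=
  le_iInf₂ fun c hc => iInf₂_le c (h.trans hc)

-- The definition of the content sums over sequences: other families are padded with tiny cubes.
lemma dyadicContent_le_tsum (hδ : 0 < δ) {ι : Type*} [Countable ι] (c : ι → DyadicIndex n)
    {E : Set (En n)} (hE : E ⊆ interior (⋃ i, (c i).cube)) :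
    dyadicContent n δ E ≤ ∑' i, scaleWeight δ (c i).scale := by
  refine ENNReal.le_of_forall_pos_le_add fun ε hε _ => ?_
  obtain ⟨η, hη, hηsum⟩ :=
    ENNReal.exists_pos_sum_of_countable (ENNReal.coe_ne_zero.2 hε.ne') ℕ
  have hsmall (j : ℕ) : ∃ k, scaleWeight δ k < η j :=
    ((tendsto_scaleWeight_atBot hδ).eventually_lt_const (ENNReal.coe_pos.2 (hη j))).exists
  choose k hk using hsmall
  let d : ι ⊕ ℕ → DyadicIndex n := Sum.elim c fun j => ⟨k j, 0⟩
  obtain ⟨e⟩ : Nonempty (ℕ ≃ ι ⊕ ℕ) := nonempty_equiv_of_countable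
  have hcover : ⋃ i, (c i).cube ⊆ ⋃ j, (d (e j)).cube :=
    iUnion_subset fun i => subset_iUnion_of_subset (e.symm (.inl i)) (by simp [d])
  calc dyadicContent n δ E
      ≤ ∑' j, scaleWeight δ (d (e j)).scale :=
        iInf₂_le (fun j => ((d (e j)).scale, (d (e j)).corner)) (hE.trans (interior_mono hcover))
    _ = ∑' x, scaleWeight δ (d x).scale := e.tsum_eq fun x => scaleWeight δ (d x).scale
    _ = ∑' i, scaleWeight δ (c i).scale + ∑' j, scaleWeight δ (k j) :=
        ENNReal.summable.tsum_sum ENNReal.summable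
    _ ≤ ∑' i, scaleWeight δ (c i).scale + ε :=
        add_le_add_right ((ENNReal.tsum_le_tsum fun j => (hk j).le).trans hηsum.le) _

lemma dyadicContent_le_cubeCost (hδ : 0 < δ) {C : Set (DyadicIndex n)} {E : Set (En n)}
    (hE : E ⊆ interior (cubeUnion C)) : dyadicContent n δ E ≤ cubeCost n δ C := by
  rw [cubeCost_apply]
  rw [cubeUnion, biUnion_eq_iUnion] at hE
  exact dyadicContent_le_tsum hδ (fun q : C => q.1) hE

lemma exists_cover_of_dyadicContent_lt {E : Set (En n)} {a : ℝ≥0∞} (h : dyadicContent n δ E < a) :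
    ∃ C : Set (DyadicIndex n), E ⊆ interior (cubeUnion C) ∧ cubeCost n δ C < a := by
  simp only [dyadicContent, iInf_lt_iff] at h
  obtain ⟨c, hE, hc⟩ := h
  let d : ℕ → DyadicIndex n := fun i => ⟨(c i).1, (c i).2⟩
  refine ⟨range d, by rwa [cubeUnion, biUnion_range], lt_of_le_of_lt ?_ hc⟩
  rw [← iUnion_singleton_eq_range]
  refine (measure_iUnion_le _).trans_eq (tsum_congr fun i => cubeCost_singleton (d i))

lemma exists_cover_of_dyadicContent_ne_top {E : Set (En n)} (hE : dyadicContent n δ E ≠ ⊤)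
    {η : ℝ≥0∞} (hη : η ≠ 0) : ∃ C : Set (DyadicIndex n), E ⊆ interior (cubeUnion C) ∧
      cubeCost n δ C ≤ dyadicContent n δ E + η := by
  obtain ⟨C, hEC, hC⟩ := exists_cover_of_dyadicContent_lt (ENNReal.lt_add_right hE hη)
  exact ⟨C, hEC, hC.le⟩

/-- The dyadic Hausdorff content as an outer measure, which gives access to the library of null
sets and countable unions. -/
def dyadicOuterMeasure (n : ℕ) (hδ : 0 < δ) : OuterMeasure (En n) where
  measureOf := dyadicContent n δ
  empty := by
    simpa using dyadicContent_le_cubeCost (n := n) hδ (empty_subset (interior (cubeUnion ∅)))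
  mono := dyadicContent_mono
  iUnion_nat E _ := by
    refine ENNReal.le_of_forall_pos_le_add fun ε hε hfin => ?_
    obtain ⟨η, hη, hηsum⟩ :=
      ENNReal.exists_pos_sum_of_countable (ENNReal.coe_ne_zero.2 hε.ne') ℕ
    choose C hEC hC using fun i => exists_cover_of_dyadicContent_ne_top
      (ENNReal.ne_top_of_tsum_ne_top hfin.ne i) (ENNReal.coe_ne_zero.2 (hη i).ne')
    have hE : ⋃ i, E i ⊆ interior (cubeUnion (⋃ i, C i)) := iUnion_subset fun i =>
      (hEC i).trans (interior_mono (cubeUnion_mono (subset_iUnion C i)))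
    calc dyadicContent n δ (⋃ i, E i)
        ≤ cubeCost n δ (⋃ i, C i) := dyadicContent_le_cubeCost hδ hE
      _ ≤ ∑' i, cubeCost n δ (C i) := measure_iUnion_le C
      _ ≤ ∑' i, (dyadicContent n δ (E i) + η i) := ENNReal.tsum_le_tsum hC
      _ = ∑' i, dyadicContent n δ (E i) + ∑' i, (η i : ℝ≥0∞) := ENNReal.tsum_add
      _ ≤ ∑' i, dyadicContent n δ (E i) + ε := add_le_add_right hηsum.le _

lemma dyadicOuterMeasure_apply (hδ : 0 < δ) (E : Set (En n)) :
    dyadicOuterMeasure n hδ E = dyadicContent n δ E :=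
  rfl

lemma cubeCost_maximalCubes_accumulate_le (hδ : 0 < δ) {E : ℕ → Set (En n)} (hE : Monotone E)
    {C : ℕ → Set (DyadicIndex n)} {e : ℕ → ℝ≥0∞} (hEC : ∀ k, E k ⊆ interior (cubeUnion (C k)))
    (hC : ∀ k, cubeCost n δ (C k) ≤ dyadicContent n δ (E k) + e k) {B : ℝ≥0∞} (hBtop : B ≠ ⊤)
    (hB : ∀ k, dyadicContent n δ (E k) ≤ B) {K : ℤ} (hK : ∀ k, ∀ q ∈ C k, q.scale ≤ K) (k : ℕ) :
    cubeCost n δ (maximalCubes (accumulate C k)) ≤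
      dyadicContent n δ (E k) + ∑ i ∈ Finset.range (k + 1), e i := by
  induction k with
  | zero =>
    simpa using (measure_mono (maximalCubes_subset (C 0))).trans (hC 0)
  | succ k ih =>
    set S := accumulate C k
    have hSK : ∀ q ∈ S, q.scale ≤ K := fun q hq =>
      have ⟨i, _, hqi⟩ := mem_accumulate.1 hq
      hK i q hqi
    have hmeet : E k ⊆ interior (cubeUnion (commonRefinement (maximalCubes S) (C (k + 1)))) :=
      calc E k ⊆ interior (cubeUnion (maximalCubes S)) ∩ interior (cubeUnion (C (k + 1))) :=
            subset_inter
              ((hEC k).trans (interior_mono ((cubeUnion_mono subset_accumulate).trans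
                (cubeUnion_subset_cubeUnion_maximalCubes hSK))))
              ((hE k.le_succ).trans (hEC (k + 1)))
        _ ⊆ _ := by
            rw [← interior_inter]
            exact interior_mono (cubeUnion_inter_subset _ _)
    rw [accumulate_succ, Finset.sum_range_succ,
      ← ENNReal.add_le_add_iff_right (ne_top_of_le_ne_top hBtop (hB k))]
    calc cubeCost n δ (maximalCubes (S ∪ C (k + 1))) + dyadicContent n δ (E k)
        ≤ cubeCost n δ (maximalCubes (S ∪ C (k + 1))) +
            cubeCost n δ (commonRefinement (maximalCubes S) (C (k + 1))) :=
          add_le_add_right (dyadicContent_le_cubeCost hδ hmeet) _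
      _ ≤ cubeCost n δ (maximalCubes S) + cubeCost n δ (C (k + 1)) :=
          cubeCost_maximalCubes_union_add_le S (C (k + 1))
      _ ≤ (dyadicContent n δ (E k) + ∑ i ∈ Finset.range (k + 1), e i) +
            (dyadicContent n δ (E (k + 1)) + e (k + 1)) := add_le_add ih (hC (k + 1))
      _ = _ := by ring

theorem dyadicContent_iUnion_eq_iSup (hδ : 0 < δ) {E : ℕ → Set (En n)} (hE : Monotone E) :
    dyadicContent n δ (⋃ k, E k) = ⨆ k, dyadicContent n δ (E k) := by
  refine le_antisymm (ENNReal.le_of_forall_pos_le_add fun ε hε hfin => ?_)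
    (iSup_le fun k => dyadicContent_mono (subset_iUnion E k))
  set B := ⨆ k, dyadicContent n δ (E k)
  have hB (k : ℕ) : dyadicContent n δ (E k) ≤ B := le_iSup (fun k => dyadicContent n δ (E k)) k
  obtain ⟨η, hη, hηsum⟩ :=
    ENNReal.exists_pos_sum_of_countable (ENNReal.coe_ne_zero.2 hε.ne') ℕ
  choose C hEC hC using fun k => exists_cover_of_dyadicContent_ne_top
    (ne_top_of_le_ne_top hfin.ne (hB k)) (ENNReal.coe_ne_zero.2 (hη k).ne')
  have hsum (s : Finset ℕ) : ∑ i ∈ s, (η i : ℝ≥0∞) ≤ ε := (ENNReal.sum_le_tsum s).trans hηsum.le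
  obtain ⟨K, hK⟩ := exists_scale_le_of_scaleWeight_le hδ
    (ENNReal.add_ne_top.2 ⟨hfin.ne, ENNReal.coe_ne_top (r := ε)⟩)
  have hCK (k : ℕ) (q) (hq : q ∈ C k) : q.scale ≤ K := hK _ <|
    calc scaleWeight δ q.scale ≤ cubeCost n δ (C k) := scaleWeight_le_cubeCost hq
      _ ≤ dyadicContent n δ (E k) + η k := hC k
      _ ≤ B + ε := add_le_add (hB k) (by simpa using hsum {k})
  have hcover : ⋃ k, E k ⊆ interior (cubeUnion (maximalCubes (⋃ k, C k))) :=
    iUnion_subset fun k => (hEC k).trans (interior_mono ((cubeUnion_mono (subset_iUnion C k)).trans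
      (cubeUnion_subset_cubeUnion_maximalCubes fun q hq =>
        have ⟨i, hqi⟩ := mem_iUnion.1 hq
        hCK i q hqi)))
  refine (dyadicContent_le_cubeCost hδ hcover).trans ?_
  rw [← iUnion_accumulate]
  exact cubeCost_maximalCubes_iUnion_le monotone_accumulate fun k =>
    (cubeCost_maximalCubes_accumulate_le hδ hE hEC hC hfin.ne hB hCK k).trans
      (add_le_add (hB k) (hsum _))

/-! ### Translations and null sets -/

-- In each direction two adjacent grid cubes contain the translate, and a third one brings it into
-- the interior of the union.
lemma dyadicContent_translate_cube_le (hδ : 0 < δ) (q : DyadicIndex n) (v : En n) :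
    dyadicContent n δ {x | x + v ∈ q.cube} ≤ 3 ^ n * scaleWeight δ q.scale := by
  set L : ℝ := 2 ^ q.scale
  let m (i : Fin n) : ℤ := ⌊q.corner i - v i / L⌋ - 1
  let U : Set (En n) := {x | ∀ i, x i / L ∈ Ioo (m i : ℝ) (m i + 3)}
  let c (σ : Fin n → Fin 3) : DyadicIndex n := ⟨q.scale, fun i => m i + (σ i : ℕ)⟩
  have hU : IsOpen U := by
    simp only [U, ofPred_forall]
    exact isOpen_iInter_of_finite fun i => isOpen_Ioo.preimage (by fun_prop)
  have hqU : {x | x + v ∈ q.cube} ⊆ U := by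
    intro x hx i
    have hfloor := Int.floor_eq_iff.1 (DyadicIndex.mem_cube_iff_floor.1 hx i)
    rw [PiLp.add_apply, add_div] at hfloor
    have hle := Int.floor_le ((q.corner i : ℝ) - v i / L)
    have hlt := Int.lt_floor_add_one ((q.corner i : ℝ) - v i / L)
    simp only [m, mem_Ioo, Int.cast_sub, Int.cast_one]
    constructor <;> linarith [hfloor.1, hfloor.2]
  have hUc : U ⊆ ⋃ σ, (c σ).cube := by
    intro x hx
    have hm (i : Fin n) : m i ≤ ⌊x i / L⌋ ∧ ⌊x i / L⌋ < m i + 3 :=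
      ⟨Int.le_floor.2 (hx i).1.le, Int.floor_lt.2 (by simpa using (hx i).2)⟩
    refine mem_iUnion.2 ⟨fun i => ⟨(⌊x i / L⌋ - m i).toNat, by have := hm i; omega⟩,
      DyadicIndex.mem_cube_iff_floor.2 fun i => ?_⟩
    have := hm i
    change ⌊x i / L⌋ = m i + ((⌊x i / L⌋ - m i).toNat : ℤ)
    omega
  refine (dyadicContent_le_tsum hδ c (hqU.trans (interior_maximal hUc hU))).trans_eq ?_
  simp [c, tsum_fintype]

lemma dyadicContent_translate_cubeUnion_le (hδ : 0 < δ) (C : Set (DyadicIndex n)) (v : En n) :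
    dyadicContent n δ {x | x + v ∈ cubeUnion C} ≤ 3 ^ n * cubeCost n δ C := by
  have hunion : {x | x + v ∈ cubeUnion C} = ⋃ q ∈ C, {x | x + v ∈ q.cube} := by
    ext x
    simp [mem_cubeUnion]
  rw [hunion, cubeCost_apply, ← ENNReal.tsum_mul_left]
  exact (measure_biUnion_le (dyadicOuterMeasure n hδ) C.to_countable _).trans
    (ENNReal.tsum_le_tsum fun q => dyadicContent_translate_cube_le hδ q.1 v)

lemma dyadicContent_singleton (hδ : 0 < δ) (p : En n) : dyadicContent n δ {p} = 0 := by
  have hlim : Tendsto (fun k => 3 ^ n * scaleWeight δ k) atBot (𝓝 0) := by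
    simpa using ENNReal.Tendsto.const_mul (tendsto_scaleWeight_atBot hδ) (.inr (by finiteness))
  refine le_antisymm (ge_of_tendsto' hlim fun k => ?_) zero_le
  obtain ⟨q, rfl, hq⟩ := DyadicIndex.exists_mem_cube k p
  refine (dyadicContent_mono ?_).trans (dyadicContent_translate_cube_le hδ q 0)
  simpa using hq

lemma dyadicContent_eq_zero_of_countable (hδ : 0 < δ) {E : Set (En n)} (hE : E.Countable) :
    dyadicContent n δ E = 0 := by
  rw [← biUnion_of_singleton E, ← dyadicOuterMeasure_apply hδ, measure_biUnion_null_iff hE]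
  exact fun p _ => dyadicContent_singleton hδ p

lemma dyadicContent_eventually_translate_cubeUnion_le (hδ : 0 < δ) (C : Set (DyadicIndex n))
    (v : ℕ → En n) :
    dyadicContent n δ {p | ∀ᶠ k in atTop, p + v k ∈ cubeUnion C} ≤ 3 ^ n * cubeCost n δ C := by
  let E (k : ℕ) : Set (En n) := {p | ∀ j ≥ k, p + v j ∈ cubeUnion C}
  have hmono : Monotone E := fun k l hkl p hp j hj => hp j (hkl.trans hj)
  have hunion : {p | ∀ᶠ k in atTop, p + v k ∈ cubeUnion C} = ⋃ k, E k := by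
    ext p
    simp [E, eventually_atTop]
  have hsub (k : ℕ) : E k ⊆ {p | p + v k ∈ cubeUnion C} := fun p hp => hp k le_rfl
  rw [hunion, dyadicContent_iUnion_eq_iSup hδ hmono]
  exact iSup_le fun k => (dyadicContent_mono (hsub k)).trans
    (dyadicContent_translate_cubeUnion_le hδ C (v k))

lemma dyadicContent_eventually_notMem_cube_eq_zero (hδ : 0 < δ) {C : Set (DyadicIndex n)}
    (hC : cubeCost n δ C ≠ ⊤) (v : ℕ → En n) :
    dyadicContent n δ {p | (∀ᶠ k in atTop, p + v k ∈ cubeUnion C) ∧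
      ∀ q ∈ C, ∀ᶠ k in atTop, p + v k ∉ q.cube} = 0 := by
  have hlim : Tendsto (fun F : Finset (DyadicIndex n) => 3 ^ n * cubeCost n δ (C \ F)) atTop
      (𝓝 0) := by
    simpa using ENNReal.Tendsto.const_mul (tendsto_cubeCost_diff_finset hC) (.inr (by finiteness))
  refine le_antisymm (ge_of_tendsto' hlim fun F => ?_) zero_le
  refine (dyadicContent_mono ?_).trans
    (dyadicContent_eventually_translate_cubeUnion_le hδ (C \ F) v)
  rintro p ⟨hU, hescape⟩
  have hF : ∀ᶠ k in atTop, ∀ q ∈ F, q ∈ C → p + v k ∉ q.cube :=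
    F.eventually_all.2 fun q _ => eventually_imp_distrib_left.2 (hescape q)
  filter_upwards [hU, hF] with k hkU hkF
  obtain ⟨q, hqC, hkq⟩ := mem_cubeUnion.1 hkU
  exact mem_cubeUnion.2 ⟨q, ⟨hqC, fun hqF => hkF q hqF hqC hkq⟩, hkq⟩

/-! ### Content of balls -/

/-- The dyadic rationals, among which are all coordinates at which faces of dyadic cubes lie. -/
def dyadicRationals : Set ℝ := range fun a : ℤ × ℤ => (a.1 : ℝ) * 2 ^ a.2

/-- The orthant with vertex `p` of the points lying below `p` exactly in the coordinates from `s`.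
The orthants with vertex `p` partition the space. -/
def orthantAt (p : En n) (s : Set (Fin n)) : Set (En n) := {y | ∀ i, y i < p i ↔ i ∈ s}

lemma mem_nhds_of_forall_mem_nhdsWithin_orthantAt {p : En n} {A : Set (En n)}
    (h : ∀ s, A ∈ 𝓝[orthantAt p s] p) : A ∈ 𝓝 p := by
  have hunion : ⋃ s, orthantAt p s = univ :=
    eq_univ_of_forall fun y => mem_iUnion.2 ⟨{i | y i < p i}, fun _ => Iff.rfl⟩
  rw [← nhdsWithin_univ, ← hunion, nhdsWithin_iUnion]
  exact mem_iSup.2 h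

section FrequentlyMemIco

variable {a b x : ℝ} {u : ℕ → ℝ}

lemma mem_Icc_of_frequently_add_mem_Ico (hu : Tendsto u atTop (𝓝 0))
    (h : ∃ᶠ k in atTop, x + u k ∈ Ico a b) : x ∈ Icc a b :=
  isClosed_Icc.mem_of_frequently_of_tendsto (h.mono fun _ hk => Ico_subset_Icc_self hk)
    (by simpa using hu.const_add x)

lemma Ico_mem_nhdsLT_of_frequently_add_mem (hu : Tendsto u atTop (𝓝 0))
    (h : ∃ᶠ k in atTop, x + u k ∈ Ico a b) (hneg : ∀ k, u k < 0) : Ico a b ∈ 𝓝[<] x := by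
  obtain ⟨k, hk⟩ := h.exists
  exact Ico_mem_nhdsLT_of_mem
    ⟨by linarith [hk.1, hneg k], (mem_Icc_of_frequently_add_mem_Ico hu h).2⟩

lemma Ico_mem_nhdsGE_of_frequently_add_mem (hu : Tendsto u atTop (𝓝 0))
    (h : ∃ᶠ k in atTop, x + u k ∈ Ico a b) (hnonneg : ∀ k, 0 ≤ u k) : Ico a b ∈ 𝓝[≥] x := by
  obtain ⟨k, hk⟩ := h.exists
  exact Ico_mem_nhdsGE_of_mem
    ⟨(mem_Icc_of_frequently_add_mem_Ico hu h).1, by linarith [hk.2, hnonneg k]⟩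

end FrequentlyMemIco

lemma DyadicIndex.cube_mem_nhdsWithin_orthantAt {q : DyadicIndex n} {p : En n} {s : Set (Fin n)}
    {u : ℕ → En n} (hu : Tendsto u atTop (𝓝 0)) (hfreq : ∃ᶠ k in atTop, p + u k ∈ q.cube)
    (hsign : ∀ i, p i ∈ dyadicRationals → ∀ k, u k i < 0 ↔ i ∈ s) :
    q.cube ∈ 𝓝[orthantAt p s] p := by
  let a (m : ℤ) : ℝ := m * 2 ^ q.scale
  have hIco (i : Fin n) :
      ∀ᶠ y in 𝓝[orthantAt p s] p, y i ∈ Ico (a (q.corner i)) (a (q.corner i + 1)) := by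
    have hcont : ContinuousWithinAt (fun y : En n => y i) (orthantAt p s) p := by fun_prop
    have hui : Tendsto (fun k => u k i) atTop (𝓝 0) :=
      ((PiLp.continuous_apply 2 _ i).tendsto' 0 0 rfl).comp hu
    have hfi : ∃ᶠ k in atTop, p i + u k i ∈ Ico (a (q.corner i)) (a (q.corner i + 1)) :=
      hfreq.mono fun k hk => by simpa [a] using hk i
    by_cases hdyadic : p i ∈ dyadicRationals
    · by_cases his : i ∈ s
      · exact (hcont.tendsto_nhdsWithin (t := Iio (p i)) fun y hy => (hy i).2 his)
          (Ico_mem_nhdsLT_of_frequently_add_mem hui hfi fun k => (hsign i hdyadic k).2 his)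
      · exact (hcont.tendsto_nhdsWithin (t := Ici (p i)) fun y hy => not_lt.1 (mt (hy i).1 his))
          (Ico_mem_nhdsGE_of_frequently_add_mem hui hfi fun k =>
            not_lt.1 (mt (hsign i hdyadic k).1 his))
    · have hne (m : ℤ) : a m ≠ p i := fun h => hdyadic ⟨(m, q.scale), h⟩
      have hmem := mem_Icc_of_frequently_add_mem_Ico hui hfi
      exact hcont.tendsto.eventually
        (Ico_mem_nhds (hmem.1.lt_of_ne (hne _)) (hmem.2.lt_of_ne (hne _).symm))
  exact (eventually_all.2 hIco).mono fun y hy i => by simpa [a] using hy i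

/- A cover `C` of `U` contains each of the sequences `p + v j k`. Unless `p` lies in a null set, the
sequence keeps returning to a single cube of `C`, which then fills an orthant at `p`. -/
theorem dyadicContent_le_of_forall_orthant (hδ : 0 < δ) {ι : Type*} [Countable ι]
    {v : ι → ℕ → En n} (hv : ∀ j, Tendsto (v j) atTop (𝓝 0)) {E U : Set (En n)}
    (hE : ∀ p ∈ E, ∀ s : Set (Fin n), ∃ j, (∀ k, p + v j k ∈ U) ∧
      ∀ i, p i ∈ dyadicRationals → ∀ k, v j k i < 0 ↔ i ∈ s) :
    dyadicContent n δ E ≤ dyadicContent n δ U := by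
  refine le_of_forall_gt_imp_ge_of_dense fun a ha => ?_
  obtain ⟨C, hUC, hCa⟩ := exists_cover_of_dyadicContent_lt ha
  let N (j : ι) : Set (En n) := {p | (∀ᶠ k in atTop, p + v j k ∈ cubeUnion C) ∧
    ∀ q ∈ C, ∀ᶠ k in atTop, p + v j k ∉ q.cube}
  have hN : dyadicOuterMeasure n hδ (⋃ j, N j) = 0 := measure_iUnion_null fun j =>
    dyadicContent_eventually_notMem_cube_eq_zero hδ hCa.ne_top (v j)
  have hEN : E ⊆ interior (cubeUnion C) ∪ ⋃ j, N j := by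
    refine fun p hp => or_iff_not_imp_right.2 fun hpN => mem_interior_iff_mem_nhds.2 <|
      mem_nhds_of_forall_mem_nhdsWithin_orthantAt fun s => ?_
    obtain ⟨j, hjU, hjs⟩ := hE p hp s
    have hreturn : ∃ q ∈ C, ∃ᶠ k in atTop, p + v j k ∈ q.cube := by
      by_contra! hescape
      exact hpN (mem_iUnion.2 ⟨j, .of_forall fun k => interior_subset (hUC (hjU k)),
        hescape⟩)
    obtain ⟨q, hq, hfreq⟩ := hreturn
    exact mem_of_superset (q.cube_mem_nhdsWithin_orthantAt (hv j) hfreq hjs)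
      (subset_biUnion_of_mem hq)
  calc dyadicContent n δ E
      ≤ dyadicOuterMeasure n hδ (interior (cubeUnion C) ∪ ⋃ j, N j) := dyadicContent_mono hEN
    _ ≤ dyadicContent n δ (interior (cubeUnion C)) + dyadicOuterMeasure n hδ (⋃ j, N j) :=
        measure_union_le _ _
    _ ≤ cubeCost n δ C + 0 := add_le_add (dyadicContent_le_cubeCost hδ Subset.rfl) hN.le
    _ ≤ a := by simpa using hCa.le

lemma dist_toLp_update_lt {p c : En n} {k : Fin n} (h : p k ≠ c k) :
    dist (WithLp.toLp 2 (Function.update p k (c k)) : En n) c < dist p c := by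
  rw [EuclideanSpace.dist_eq, EuclideanSpace.dist_eq]
  refine Real.sqrt_lt_sqrt (by positivity)
    (Finset.sum_lt_sum (fun i _ => ?_) ⟨k, Finset.mem_univ k, ?_⟩)
  · rcases eq_or_ne i k with rfl | hik
    · simp
    · simp [hik]
  · simpa using pow_pos (dist_pos.2 h) 2

/- The point `p` is moved into the ball by pushing its `k`-th coordinate to that of the centre; a
perturbation then gives all other coordinates the prescribed signs. -/
lemma exists_add_mem_ball_of_ne {c p : En n} {r : ℝ} (hp : p ∈ closedBall c r) {k : Fin n}
    (hk : p k ≠ c k) (σ : En n) (hσ : ∀ i, σ i ≠ 0) :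
    ∃ w, p + w ∈ ball c r ∧ ∀ i ≠ k, 0 < w i * σ i := by
  let y : En n := WithLp.toLp 2 (Function.update p k (c k))
  have hy : y ∈ ball c r := (dist_toLp_update_lt hk).trans_le hp
  have hlim : Tendsto (fun η : ℝ => y + η • σ) (𝓝[>] 0) (𝓝 y) :=
    ((by fun_prop : Continuous fun η : ℝ => y + η • σ).tendsto' 0 y (by simp)).mono_left
      nhdsWithin_le_nhds
  obtain ⟨η, hη, hηball⟩ :=
    (eventually_mem_nhdsWithin.and (hlim.eventually (isOpen_ball.mem_nhds hy))).exists
  refine ⟨y + η • σ - p, by simpa using hηball, fun i hi => ?_⟩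
  have hi' : (y + η • σ - p) i * σ i = η * (σ i * σ i) := by
    simp [y, hi, mul_assoc]
  rw [hi']
  exact mul_pos hη (mul_self_pos.2 (hσ i))

lemma exists_denseSeq_add_mem_ball {c p : En n} {r : ℝ} (hp : p ∈ closedBall c r) {k : Fin n}
    (hk : p k ≠ c k) (s : Set (Fin n)) :
    ∃ j, p + denseSeq (En n) j ∈ ball c r ∧
      ∀ i ≠ k, denseSeq (En n) j i < 0 ↔ i ∈ s := by
  classical
  let σ : En n := WithLp.toLp 2 fun i => if i ∈ s then -1 else 1
  let W : Set (En n) := {w | p + w ∈ ball c r ∧ ∀ i ≠ k, 0 < w i * σ i}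
  have hW : IsOpen W := by
    simp only [W, ofPred_and, ofPred_forall]
    exact (isOpen_ball.preimage (by fun_prop)).inter
      (isOpen_iInter_of_finite fun i => isOpen_iInter_of_finite fun _ =>
        isOpen_lt continuous_const (by fun_prop))
  have hWne : W.Nonempty :=
    exists_add_mem_ball_of_ne hp hk σ fun i => by simp only [σ]; split_ifs <;> norm_num
  obtain ⟨j, hball, hsign⟩ := (denseRange_denseSeq (En n)).exists_mem_open hW hWne
  refine ⟨j, hball, fun i hi => ?_⟩
  by_cases his : i ∈ s
  · exact iff_of_true (by simpa [σ, his] using hsign i hi) his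
  · exact iff_of_false (not_lt.2 (by simpa [σ, his] using (hsign i hi).le)) his

lemma countable_setOf_forall_mem {S : Fin n → Set ℝ} (hS : ∀ i, (S i).Countable) :
    {p : En n | ∀ i, p i ∈ S i}.Countable :=
  (Set.countable_pi hS).preimage (WithLp.ofLp_injective 2)

theorem dyadicContent_closedBall_eq_ball (hδ : 0 < δ) (c : En n) {r : ℝ} (hr : 0 < r) :
    dyadicContent n δ (closedBall c r) = dyadicContent n δ (ball c r) := by
  refine le_antisymm ?_ (dyadicContent_mono ball_subset_closedBall)
  let N : Set (En n) := {p | ∀ i, p i ∈ insert (c i) dyadicRationals}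
  have hN : dyadicOuterMeasure n hδ N = 0 := dyadicContent_eq_zero_of_countable hδ
    (countable_setOf_forall_mem fun i => (countable_range _).insert (c i))
  let v (j k : ℕ) : En n := (1 / ((k : ℝ) + 1)) • denseSeq (En n) j
  have hv (j : ℕ) : Tendsto (v j) atTop (𝓝 0) := by
    simpa [v] using (tendsto_one_div_add_atTop_nhds_zero_nat (𝕜 := ℝ)).smul_const
      (denseSeq (En n) j)
  have horthant : ∀ p ∈ closedBall c r \ N, ∀ s : Set (Fin n), ∃ j, (∀ k, p + v j k ∈ ball c r) ∧
      ∀ i, p i ∈ dyadicRationals → ∀ k, v j k i < 0 ↔ i ∈ s := by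
    rintro p ⟨hp, hpN⟩ s
    obtain ⟨i₀, hi₀⟩ := not_forall.1 hpN
    rw [mem_insert_iff, not_or] at hi₀
    obtain ⟨j, hjball, hjs⟩ := exists_denseSeq_add_mem_ball hp hi₀.1 s
    refine ⟨j, fun k => ?_, fun i hi k => ?_⟩
    · rw [← isOpen_ball.interior_eq] at hjball ⊢
      exact (convex_ball c r).add_smul_mem_interior' (by rwa [closure_ball c hr.ne']) hjball
        ⟨Nat.one_div_pos_of_nat, (div_le_one (by positivity)).2 (by simp)⟩
    · rw [← hjs i (ne_of_mem_of_not_mem hi hi₀.2 ∘ congrArg p)]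
      exact smul_neg_iff_of_pos_left (a := 1 / ((k : ℝ) + 1)) Nat.one_div_pos_of_nat
  calc dyadicContent n δ (closedBall c r)
      ≤ dyadicOuterMeasure n hδ (closedBall c r \ N) := (measure_sdiff_null hN).ge
    _ ≤ dyadicContent n δ (ball c r) := dyadicContent_le_of_forall_orthant hδ hv horthant

/-! ### Semicontinuity of the averages -/

lemma upperSemicontinuous_dyadicContent_ball (hδ : 0 < δ) (r : ℝ) :
    UpperSemicontinuous fun x : En n => dyadicContent n δ (ball x r) := by
  rcases le_or_gt r 0 with hr | hr
  · simpa only [ball_eq_empty.2 hr] using upperSemicontinuous_const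
  intro x a (ha : dyadicContent n δ (ball x r) < a)
  rw [← dyadicContent_closedBall_eq_ball hδ x hr] at ha
  obtain ⟨C, hC, hCa⟩ := exists_cover_of_dyadicContent_lt ha
  obtain ⟨ε, hε, hεC⟩ := (isCompact_closedBall x r).exists_thickening_subset_open isOpen_interior hC
  rw [thickening_closedBall hε hr.le] at hεC
  filter_upwards [ball_mem_nhds x hε] with y hy
  have hyC : ball y r ⊆ interior (cubeUnion C) :=
    (ball_subset_ball' (by linarith [mem_ball.1 hy])).trans hεC
  exact (dyadicContent_le_cubeCost hδ hyC).trans_lt hCa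

lemma choquetIntegral_mono {Ω Ω' : Set (En n)} (h : Ω ⊆ Ω') (f : En n → ℝ≥0∞) :
    choquetIntegral n δ Ω f ≤ choquetIntegral n δ Ω' f :=
  lintegral_mono fun _ => dyadicContent_mono fun _ hx => ⟨h hx.1, hx.2⟩

theorem choquetIntegral_iUnion_eq_iSup (hδ : 0 < δ) {Ω : ℕ → Set (En n)} (hΩ : Monotone Ω)
    (f : En n → ℝ≥0∞) :
    choquetIntegral n δ (⋃ j, Ω j) f = ⨆ j, choquetIntegral n δ (Ω j) f := by
  let E (j : ℕ) (t : ℝ) : Set (En n) := {x | x ∈ Ω j ∧ ENNReal.ofReal t < f x}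
  have hE (t : ℝ) : Monotone fun j => E j t := fun i j hij x hx => ⟨hΩ hij hx.1, hx.2⟩
  have hanti (j : ℕ) : Antitone fun t => dyadicContent n δ (E j t) := fun s t hst =>
    dyadicContent_mono fun x hx => ⟨hx.1, (ENNReal.ofReal_le_ofReal hst).trans_lt hx.2⟩
  have hunion (t : ℝ) : {x | x ∈ ⋃ j, Ω j ∧ ENNReal.ofReal t < f x} = ⋃ j, E j t := by
    ext x
    simp [E]
  simp only [choquetIntegral, hunion, dyadicContent_iUnion_eq_iSup hδ (hE _)]
  exact lintegral_iSup (fun j => (hanti j).measurable) fun i j hij t =>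
    dyadicContent_mono (hE t hij)

lemma lowerSemicontinuous_choquetIntegral_ball (hδ : 0 < δ) (f : En n → ℝ≥0∞) (r : ℝ) :
    LowerSemicontinuous fun x : En n => choquetIntegral n δ (ball x r) f := by
  intro x a (ha : a < choquetIntegral n δ (ball x r) f)
  let ε (j : ℕ) : ℝ := 1 / ((j : ℝ) + 1)
  have hmono : Monotone fun j => ball x (r - ε j) := fun i j hij =>
    ball_subset_ball (sub_le_sub_left (one_div_le_one_div_of_le (by positivity) (by gcongr)) r)
  have hunion : ball x r = ⋃ j, ball x (r - ε j) := by
    refine Subset.antisymm (fun y hy => ?_)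
      (iUnion_subset fun j => ball_subset_ball (sub_le_self r Nat.one_div_pos_of_nat.le))
    obtain ⟨j, hj⟩ := exists_nat_one_div_lt (sub_pos.2 (mem_ball.1 hy))
    exact mem_iUnion.2 ⟨j, by rw [mem_ball]; linarith⟩
  rw [hunion, choquetIntegral_iUnion_eq_iSup hδ hmono, lt_iSup_iff] at ha
  obtain ⟨j, hj⟩ := ha
  filter_upwards [ball_mem_nhds x (Nat.one_div_pos_of_nat : 0 < ε j)] with y hy
  exact hj.trans_le (choquetIntegral_mono (ball_subset_ball' (by linarith [mem_ball'.1 hy])) f)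

section LowerSemicontinuous

variable {X : Type*} [TopologicalSpace X]

lemma lowerSemicontinuous_ennreal_div {g h : X → ℝ≥0∞} (hg : LowerSemicontinuous g)
    (hh : UpperSemicontinuous h) : LowerSemicontinuous fun x => g x / h x := by
  have hinv : LowerSemicontinuous fun x => (h x)⁻¹ :=
    continuous_inv.comp_upperSemicontinuous_antitone hh fun _ _ => ENNReal.inv_le_inv.2
  intro x a ha
  have hfactors : ∃ b < g x, ∃ c < (h x)⁻¹, a < b * c := by
    contrapose! ha
    exact ENNReal.mul_le_of_forall_lt ha
  obtain ⟨b, hb, c, hc, habc⟩ := hfactors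
  filter_upwards [hg x b hb, hinv x c hc] with y hby hcy
  exact habc.trans_le (mul_le_mul' hby.le hcy.le)

lemma measurable_limsup_of_lowerSemicontinuous [MeasurableSpace X] [OpensMeasurableSpace X]
    {Y : Type*} [CompleteLinearOrder Y] [TopologicalSpace Y] [OrderTopology Y]
    [SecondCountableTopology Y] [MeasurableSpace Y] [BorelSpace Y] {ι : Type*} {l : Filter ι}
    [l.IsCountablyGenerated] {F : ι → X → Y} (hF : ∀ i, LowerSemicontinuous (F i)) :
    Measurable fun x => limsup (fun i => F i x) l := by
  obtain ⟨s, hs⟩ := l.exists_antitone_basis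
  simp only [hs.toHasBasis.limsup_eq_iInf_iSup, iInf_true]
  exact .iInf fun k => (lowerSemicontinuous_biSup fun i _ => hF i).measurable

end LowerSemicontinuous

theorem lowerSemicontinuous_ballAvg (hδ : 0 < δ) (f : En n → ℝ≥0∞) (r : ℝ) :
    LowerSemicontinuous fun x => ballAvg n δ f x r :=
  lowerSemicontinuous_ennreal_div (lowerSemicontinuous_choquetIntegral_ball hδ f r)
    (upperSemicontinuous_dyadicContent_ball hδ r)

theorem measurable_limsupAvg (hδ : 0 < δ) (f : En n → ℝ≥0∞) : Measurable (limsupAvg n δ f) :=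
  measurable_limsup_of_lowerSemicontinuous fun r => lowerSemicontinuous_ballAvg hδ f r

end DyadicContent

theorem ballAvg_lsc_and_limsup_lebesgue_measurable_general (n : ℕ) (δ : ℝ) (hδ0 : 0 < δ)
    (_hδn : δ ≤ n) (f : En n → ℝ≥0∞) :
    (∀ r : ℝ, 0 < r → LowerSemicontinuous (fun x => ballAvg n δ f x r)) ∧
    Measurable (fun x => limsupAvg n δ f x) :=
  ⟨fun r _ => lowerSemicontinuous_ballAvg hδ0 f r, measurable_limsupAvg hδ0 f⟩

/-- for a nonnegative locally `nL¹(H̃^δ_∞)` function, the ball average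
`x ↦ f^δ_{B(x,r)}` is lower semicontinuous for each fixed `r > 0`, and
`x ↦ limsup_{r→0⁺} f^δ_{B(x,r)}` is Lebesgue measurable. -/
theorem ballAvg_lsc_and_limsup_lebesgue_measurable (n : ℕ) (hn : 1 ≤ n)
    (δ : ℝ) (hδ0 : 0 < δ) (hδn : δ ≤ n) (f : En n → ℝ≥0∞)
    (hf : ∀ K : Set (En n), Bornology.IsBounded K → choquetIntegral n δ K f < ⊤) :
    (∀ r : ℝ, 0 < r → LowerSemicontinuous (fun x => ballAvg n δ f x r)) ∧
    NullMeasurable (fun x => limsupAvg n δ f x) (volume : Measure (En n)) := by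
  obtain ⟨hlsc, hmeas⟩ := ballAvg_lsc_and_limsup_lebesgue_measurable_general n δ hδ0 hδn f
  exact ⟨hlsc, hmeas.nullMeasurable⟩
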